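/- arXiv:2507.19444 — 4 statements merged into one kernel-verified Lean document; each statement's English description precedes it below -/
import Mathlib

section
/- Let a > 0 and let f ∈ L¹_loc(ℝ³) be such that for almost every x ∈ ℝ³ the map y ↦ f(y)/|x − y| is integrable on ℝ³. Then the convolution 𝒦_a * f, defined for almost every x by (𝒦_a * f)(x) = ∫_{ℝ³} 𝒦_a(x−y) f(y) dy (the integral being absolutely convergent for a.e. x), belongs to L¹_loc(ℝ³). -/
/-!
If `‖K z‖ ≤ C₀` and `‖z‖ * ‖K z‖ ≤ C₁`, then `‖x₀ - y‖ ≤ ‖x - x₀‖ + ‖x - y‖` gives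
`‖x₀ - y‖ * ‖K (x - y)‖ ≤ ‖x - x₀‖ * C₀ + C₁`. So if `y ↦ f(y)/|x₀ - y|` is integrable for a single
`x₀`, then on each ball around `x₀` the integrands of `K * f` are dominated by one multiple of
`|f(y)|/|x₀ - y|`: the convolution converges absolutely everywhere and, by dominated convergence,
it is continuous when `K` is continuous away from the origin. The Bopp–Podolsky kernel is such a
`K`: `1 - e^{-t} ≤ t` and `1 - e^{-t} ≤ 1` give `C₀ = 1/(4πa)` and `C₁ = 1/(4π)`.
-/

open MeasureTheory Real Filter Topology

/-- The Bopp–Podolsky kernel `𝒦_a(x) = (1 - e^{-|x|/a})/(4π|x|)` on `ℝ³`. -/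
noncomputable def BPkernel (a : ℝ) (x : EuclideanSpace ℝ (Fin 3)) : ℝ :=
  (1 - Real.exp (-‖x‖ / a)) / (4 * Real.pi * ‖x‖)

open scoped Convolution

section Domination

variable {G E E' F : Type*} [SeminormedAddCommGroup G] [NormedAddCommGroup E']
  {K : G → E'} {C₀ C₁ M : ℝ} {x x₀ : G}

lemma norm_sub_mul_norm_apply_sub_le (hK₀ : ∀ z, ‖K z‖ ≤ C₀) (hK₁ : ∀ z, ‖z‖ * ‖K z‖ ≤ C₁)
    (hx : ‖x - x₀‖ ≤ M) (y : G) : ‖x₀ - y‖ * ‖K (x - y)‖ ≤ M * C₀ + C₁ := by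
  have triangle : ‖x₀ - y‖ ≤ ‖x - x₀‖ + ‖x - y‖ := by
    simpa only [norm_sub_rev x x₀] using norm_sub_le_norm_sub_add_norm_sub x₀ x y
  calc ‖x₀ - y‖ * ‖K (x - y)‖
      ≤ (‖x - x₀‖ + ‖x - y‖) * ‖K (x - y)‖ := by gcongr
    _ = ‖x - x₀‖ * ‖K (x - y)‖ + ‖x - y‖ * ‖K (x - y)‖ := add_mul ..
    _ ≤ M * C₀ + C₁ :=
      add_le_add (mul_le_mul hx (hK₀ _) (norm_nonneg _) ((norm_nonneg _).trans hx)) (hK₁ _)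

variable [NormedAddCommGroup E] [NormedSpace ℝ E] [NormedSpace ℝ E']
  [NormedAddCommGroup F] [NormedSpace ℝ F]

lemma norm_convolution_integrand_le (L : E →L[ℝ] E' →L[ℝ] F) (f : G → E) {y : G}
    (hK₀ : ∀ z, ‖K z‖ ≤ C₀) (hK₁ : ∀ z, ‖z‖ * ‖K z‖ ≤ C₁) (hx : ‖x - x₀‖ ≤ M)
    (hy : ‖x₀ - y‖ ≠ 0) :
    ‖L (f y) (K (x - y))‖ ≤ ‖L‖ * (M * C₀ + C₁) * ‖‖x₀ - y‖⁻¹ • f y‖ :=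
  calc ‖L (f y) (K (x - y))‖
      ≤ ‖L‖ * ‖f y‖ * ‖K (x - y)‖ := L.le_opNorm₂ _ _
    _ = ‖L‖ * (‖x₀ - y‖ * ‖K (x - y)‖) * ‖‖x₀ - y‖⁻¹ • f y‖ := by
      rw [norm_smul, norm_inv, norm_norm]; field_simp
    _ ≤ ‖L‖ * (M * C₀ + C₁) * ‖‖x₀ - y‖⁻¹ • f y‖ := by
      gcongr; exact norm_sub_mul_norm_apply_sub_le hK₀ hK₁ hx y

end Domination

section Convolution

variable {G E E' F : Type*} [NormedAddCommGroup G] [MeasurableSpace G] [OpensMeasurableSpace G]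
  {μ : Measure G} [NullSingletonClass μ]
  [NormedAddCommGroup E] [NormedSpace ℝ E] [NormedAddCommGroup E']
  {f : G → E} {K : G → E'} {C₀ C₁ : ℝ} {x₀ : G}

lemma aestronglyMeasurable_of_inv_norm_sub_smul
    (hf : AEStronglyMeasurable (fun y => ‖x₀ - y‖⁻¹ • f y) μ) : AEStronglyMeasurable f μ := by
  have hnorm : Continuous fun y => ‖x₀ - y‖ := by fun_prop
  refine (hnorm.aestronglyMeasurable.smul hf).congr ?_
  filter_upwards [Measure.ae_ne μ x₀] with y hy
  exact smul_inv_smul₀ (norm_sub_eq_zero_iff.not.mpr hy.symm) (f y)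

variable [SecondCountableTopologyEither G E']

lemma aestronglyMeasurable_comp_sub_left (hK : ContinuousOn K {0}ᶜ) (x : G) :
    AEStronglyMeasurable (fun y => K (x - y)) μ := by
  have hcont : ContinuousOn (fun y => K (x - y)) {x}ᶜ :=
    hK.comp (by fun_prop) fun y hy => sub_ne_zero.mpr (Ne.symm hy)
  rw [← Measure.restrict_eq_self_of_ae_mem (Measure.ae_ne μ x)]
  exact hcont.aestronglyMeasurable (measurableSet_singleton x).compl

variable [NormedSpace ℝ E'] [NormedAddCommGroup F] [NormedSpace ℝ F] (L : E →L[ℝ] E' →L[ℝ] F)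

lemma aestronglyMeasurable_convolution_integrand (hf : AEStronglyMeasurable f μ)
    (hK : ContinuousOn K {0}ᶜ) (x : G) :
    AEStronglyMeasurable (fun y => L (f y) (K (x - y))) μ :=
  L.aestronglyMeasurable_comp₂ hf (aestronglyMeasurable_comp_sub_left hK x)

theorem convolutionExists_of_integrable_inv_norm_sub_smul
    (hf : Integrable (fun y => ‖x₀ - y‖⁻¹ • f y) μ) (hK : ContinuousOn K {0}ᶜ)
    (hK₀ : ∀ z, ‖K z‖ ≤ C₀) (hK₁ : ∀ z, ‖z‖ * ‖K z‖ ≤ C₁) :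
    ConvolutionExists f K L μ := by
  intro x
  refine (hf.norm.const_mul (‖L‖ * (‖x - x₀‖ * C₀ + C₁))).mono'
    (aestronglyMeasurable_convolution_integrand L
      (aestronglyMeasurable_of_inv_norm_sub_smul hf.aestronglyMeasurable) hK x) ?_
  filter_upwards [Measure.ae_ne μ x₀] with y hy
  exact norm_convolution_integrand_le L f hK₀ hK₁ le_rfl
    (norm_sub_eq_zero_iff.not.mpr hy.symm)

theorem continuous_convolution_of_integrable_inv_norm_sub_smul
    (hf : Integrable (fun y => ‖x₀ - y‖⁻¹ • f y) μ) (hK : ContinuousOn K {0}ᶜ)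
    (hK₀ : ∀ z, ‖K z‖ ≤ C₀) (hK₁ : ∀ z, ‖z‖ * ‖K z‖ ≤ C₁) :
    Continuous (f ⋆[L, μ] K) := by
  refine continuous_iff_continuousAt.mpr fun x => continuousAt_of_dominated
    (bound := fun y => ‖L‖ * ((‖x - x₀‖ + 1) * C₀ + C₁) * ‖‖x₀ - y‖⁻¹ • f y‖)
    (.of_forall fun x' => aestronglyMeasurable_convolution_integrand L
      (aestronglyMeasurable_of_inv_norm_sub_smul hf.aestronglyMeasurable) hK x')
    ?_ (hf.norm.const_mul _) ?_
  · have hnear : ∀ᶠ x' in 𝓝 x, ‖x' - x₀‖ < ‖x - x₀‖ + 1 :=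
      (by fun_prop : Continuous fun x' => ‖x' - x₀‖).continuousAt.eventually_lt_const
        (lt_add_one _)
    filter_upwards [hnear] with x' hx'
    filter_upwards [Measure.ae_ne μ x₀] with y hy
    exact norm_convolution_integrand_le L f hK₀ hK₁ hx'.le
      (norm_sub_eq_zero_iff.not.mpr hy.symm)
  · filter_upwards [Measure.ae_ne μ x] with y hy
    have hK_at : ContinuousAt K (x - y) :=
      hK.continuousAt (isOpen_compl_singleton.mem_nhds (sub_ne_zero.mpr hy.symm))
    have hsub : ContinuousAt (fun x' => x' - y) x := by fun_prop
    exact (L (f y)).continuous.continuousAt.comp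
      (ContinuousAt.comp (f := fun x' => x' - y) hK_at hsub)

end Convolution

section BPkernel

variable {a : ℝ}

lemma BPkernel_nonneg (ha : 0 < a) (z : EuclideanSpace ℝ (Fin 3)) : 0 ≤ BPkernel a z := by
  have hexp : Real.exp (-‖z‖ / a) ≤ 1 :=
    Real.exp_le_one_iff.mpr (div_nonpos_of_nonpos_of_nonneg (by simp) ha.le)
  exact div_nonneg (sub_nonneg.mpr hexp) (by positivity)

lemma BPkernel_le (ha : 0 < a) (z : EuclideanSpace ℝ (Fin 3)) :
    BPkernel a z ≤ 1 / (4 * π * a) := by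
  have hexp : 1 - Real.exp (-‖z‖ / a) ≤ ‖z‖ / a := by
    rw [neg_div]; linarith [Real.one_sub_le_exp_neg (‖z‖ / a)]
  refine div_le_of_le_mul₀ (by positivity) (by positivity) (hexp.trans_eq ?_)
  field_simp

lemma norm_mul_BPkernel_le (a : ℝ) (z : EuclideanSpace ℝ (Fin 3)) :
    ‖z‖ * BPkernel a z ≤ 1 / (4 * π) := by
  rcases (norm_nonneg z).eq_or_lt with hz | hz
  · rw [← hz, zero_mul]
    positivity
  · calc ‖z‖ * BPkernel a z = (1 - Real.exp (-‖z‖ / a)) / (4 * π) := by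
          rw [BPkernel]; field_simp
      _ ≤ 1 / (4 * π) := by
          gcongr; exact sub_le_self 1 (Real.exp_pos _).le

/-- Continuity fails at `0`, where the quotient takes the junk value `0`. -/
lemma continuousOn_BPkernel (a : ℝ) : ContinuousOn (BPkernel a) {0}ᶜ := by
  refine ContinuousOn.div (by fun_prop) (by fun_prop) fun z hz => ?_
  have : 0 < ‖z‖ := norm_pos_iff.mpr hz
  positivity

end BPkernel

theorem bpKernel_conv_locallyIntegrable_general {F : Type*} [NormedAddCommGroup F]
    [NormedSpace ℝ F] {μ : Measure (EuclideanSpace ℝ (Fin 3))} [NullSingletonClass μ]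
    {a : ℝ} (ha : 0 < a) {f : EuclideanSpace ℝ (Fin 3) → F} {x₀ : EuclideanSpace ℝ (Fin 3)}
    (hf : Integrable (fun y => ‖x₀ - y‖⁻¹ • f y) μ) :
    (∀ x, Integrable (fun y => BPkernel a (x - y) • f y) μ) ∧
      Continuous fun x => ∫ y, BPkernel a (x - y) • f y ∂μ := by
  have hK₀ (z) : ‖BPkernel a z‖ ≤ 1 / (4 * π * a) := by
    simpa only [Real.norm_of_nonneg (BPkernel_nonneg ha z)] using BPkernel_le ha z
  have hK₁ (z) : ‖z‖ * ‖BPkernel a z‖ ≤ 1 / (4 * π) := by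
    simpa only [Real.norm_of_nonneg (BPkernel_nonneg ha z)] using norm_mul_BPkernel_le a z
  let smulFlip : F →L[ℝ] ℝ →L[ℝ] F := (ContinuousLinearMap.lsmul ℝ ℝ).flip
  exact ⟨convolutionExists_of_integrable_inv_norm_sub_smul smulFlip hf
      (continuousOn_BPkernel a) hK₀ hK₁,
    continuous_convolution_of_integrable_inv_norm_sub_smul smulFlip hf
      (continuousOn_BPkernel a) hK₀ hK₁⟩

/-- If `f ∈ L¹_loc(ℝ³)` and for a.e. `x` the map `y ↦ f(y)/|x-y|` is integrable,
then `𝒦_a * f` is defined a.e. (the defining integral converges absolutely for a.e. `x`)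
and `𝒦_a * f ∈ L¹_loc(ℝ³)`. -/
theorem bpKernel_conv_locallyIntegrable (a : ℝ) (ha : 0 < a)
    (f : EuclideanSpace ℝ (Fin 3) → ℝ) (hf : LocallyIntegrable f volume)
    (hint : ∀ᵐ x ∂(volume : Measure (EuclideanSpace ℝ (Fin 3))),
      Integrable (fun y => f y / ‖x - y‖) volume) :
    (∀ᵐ x ∂(volume : Measure (EuclideanSpace ℝ (Fin 3))),
      Integrable (fun y => BPkernel a (x - y) * f y) volume) ∧
    LocallyIntegrable (fun x => ∫ y, BPkernel a (x - y) * f y) volume := by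
  obtain ⟨x₀, hx₀⟩ := hint.exists
  simp only [div_eq_inv_mul] at hx₀
  obtain ⟨hconv, hcont⟩ := bpKernel_conv_locallyIntegrable_general ha hx₀
  exact ⟨.of_forall hconv, hcont.locallyIntegrable⟩
end

section
/- Let a > 0. For every y ∈ ℝ³, the translated kernel 𝒦_a(· − y) is a distributional solution of −Δφ + a²Δ²φ = δ_y; that is, for every smooth compactly supported function ψ : ℝ³ → ℝ one has ∫_{ℝ³} 𝒦_a(x − y) (−Δψ(x) + a² Δ²ψ(x)) dx = ψ(y), where Δψ denotes the Laplacian of ψ and Δ²ψ = Δ(Δψ). -/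
/-!
If `f' = φ / r ^ (n - 1)`, then on an `n`-dimensional space with unit sphere of area `σ` the
distributional Laplacian of `f(|x|)` is `φ'(|x|) / |x| ^ (n - 1) + σ φ(0) δ₀`: off the origin this
is the divergence of `φ(|x|) x / |x| ^ n`, and integrating along rays produces the boundary term
at `0`. Cutoffs `η_k` vanishing near `0` with `|∇η_k| ≤ C / |x|` show that the singularity
contributes nothing else. For `n = 3` and `f = p(r) / (4πr)` this reads
`Δ (p / (4πr)) = p'' / (4πr) - p(0) δ₀`. Hence the Yukawa kernel `Y = e^{-r/a} / (4πr)` satisfies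
`ΔY = a⁻² Y - δ₀`, the Bopp–Podolsky kernel satisfies `Δ𝒦 = -a⁻² Y`, and
`(-Δ + a²Δ²) 𝒦 = a⁻² Y - ΔY = δ₀`.
-/

open MeasureTheory Real Filter Topology

/-- The Laplacian of a function `ψ : ℝ³ → ℝ`, expressed via second derivatives along
the standard orthonormal basis. -/
noncomputable def lap (ψ : EuclideanSpace ℝ (Fin 3) → ℝ) (x : EuclideanSpace ℝ (Fin 3)) : ℝ :=
  ∑ i : Fin 3,
    iteratedFDeriv ℝ 2 ψ x ![EuclideanSpace.single i (1 : ℝ), EuclideanSpace.single i (1 : ℝ)]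

section FundamentalSolution

open Module Metric Set InnerProductSpace Laplacian

/-! ### Cutoffs away from the origin -/

section OriginCutoff

variable {E : Type*} [NormedAddCommGroup E] [NormedSpace ℝ E] [FiniteDimensional ℝ E]

variable (E) in
/-- A fixed smooth bump at the origin, rescaled to form `originCutoff`. -/
noncomputable def originBump : ContDiffBump (0 : E) := ⟨1, 2, one_pos, one_lt_two⟩

/-- Smooth cutoffs vanishing near the origin and equal to `1` off the ball of radius `2 / (k + 1)`,
for integrating by parts against functions singular at the origin. -/
noncomputable def originCutoff (k : ℕ) (x : E) : ℝ :=
  1 - originBump E ((k + 1 : ℝ) • x)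

theorem contDiff_originCutoff (k : ℕ) {n : ℕ∞} : ContDiff ℝ n (originCutoff k : E → ℝ) :=
  contDiff_const.sub ((originBump E).contDiff.comp (contDiff_const_smul _))

theorem abs_originCutoff_le_one (k : ℕ) (x : E) : |originCutoff k x| ≤ 1 := by
  rw [originCutoff, abs_of_nonneg (sub_nonneg.2 (originBump E).le_one)]
  exact sub_le_self _ (originBump E).nonneg

theorem zero_notMem_tsupport_originCutoff (k : ℕ) : (0 : E) ∉ tsupport (originCutoff k) := by
  rw [notMem_tsupport_iff_eventuallyEq]
  have hlim : Tendsto (fun x : E ↦ (k + 1 : ℝ) • x) (𝓝 0) (𝓝 0) :=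
    Continuous.tendsto' (by fun_prop) _ _ (smul_zero _)
  filter_upwards [hlim.eventually (originBump E).eventuallyEq_one] with x hx
  simp [originCutoff, hx]

theorem eventually_originCutoff_eventuallyEq_one {x : E} (hx : x ≠ 0) :
    ∀ᶠ k in atTop, originCutoff k =ᶠ[𝓝 x] 1 := by
  have hlim : Tendsto (fun k : ℕ ↦ (k + 1 : ℝ) * (‖x‖ / 2)) atTop atTop :=
    (tendsto_natCast_atTop_atTop.atTop_add tendsto_const_nhds).atTop_mul_const (by positivity)
  have hx2 : ‖x‖ / 2 < ‖x‖ := half_lt_self (norm_pos_iff.2 hx)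
  filter_upwards [hlim.eventually_ge_atTop 2] with k hk
  filter_upwards [continuous_norm.continuousAt.eventually (lt_mem_nhds hx2)] with y hy
  have h2 : 2 ≤ ‖(k + 1 : ℝ) • y‖ := by
    rw [norm_smul, norm_of_nonneg (by positivity)]
    exact hk.trans (by gcongr)
  simp [originCutoff, (originBump E).zero_of_le_dist (h2.trans_eq (dist_zero_right _).symm)]

theorem fderiv_originCutoff (k : ℕ) (x : E) :
    fderiv ℝ (originCutoff k) x
      = -((k + 1 : ℝ) • fderiv ℝ (originBump E) ((k + 1 : ℝ) • x)) := by
  rw [← fderiv_comp_smul, ← fderiv_const_sub]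
  rfl

theorem exists_norm_fderiv_originCutoff_le :
    ∃ C, ∀ k (x : E), x ≠ 0 → ‖fderiv ℝ (originCutoff k) x‖ ≤ C * ‖x‖⁻¹ := by
  have hcont : Continuous (fderiv ℝ (originBump E)) :=
    ((originBump E).contDiff (n := 1)).continuous_fderiv one_ne_zero
  obtain ⟨C, hC⟩ : ∃ C, ∀ y, ‖‖y‖ • fderiv ℝ (originBump E) y‖ ≤ C :=
    (continuous_norm.smul hcont).bounded_above_of_compact_support
      ((originBump E).hasCompactSupport.fderiv ℝ).smul_left
  refine ⟨C, fun k x hx ↦ ?_⟩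
  have hCk := hC ((k + 1 : ℝ) • x)
  rw [norm_smul, norm_norm, norm_smul] at hCk
  rw [fderiv_originCutoff, norm_neg, norm_smul, ← div_eq_mul_inv, le_div_iff₀ (norm_pos_iff.2 hx)]
  linarith

end OriginCutoff

/-! ### Weak derivatives of functions singular at the origin -/

section WeakDerivative

variable {E F : Type*} [NormedAddCommGroup E] [NormedSpace ℝ E]
  [NormedAddCommGroup F] [NormedSpace ℝ F]

theorem norm_smul_fderiv_originCutoff_smul_le [FiniteDimensional ℝ E] {k : ℕ} {C : ℝ} {x : E}
    (hC : ‖fderiv ℝ (originCutoff k) x‖ ≤ C * ‖x‖⁻¹) {g : E → F} (hg : DifferentiableAt ℝ g x)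
    (c : ℝ) (v : E) :
    ‖c • fderiv ℝ (fun x ↦ originCutoff k x • g x) x v‖
      ≤ ‖c • fderiv ℝ g x v‖ + C * ‖v‖ * ‖(‖x‖⁻¹ * c) • g x‖ := by
  have hη : DifferentiableAt ℝ (originCutoff k) x :=
    ((contDiff_originCutoff (n := 1) k).differentiable one_ne_zero).differentiableAt
  have hprod : fderiv ℝ (fun x ↦ originCutoff k x • g x) x v
      = originCutoff k x • fderiv ℝ g x v + fderiv ℝ (originCutoff k) x v • g x := by
    rw [fderiv_fun_smul hη hg]
    simp
  rw [hprod, smul_add]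
  refine (norm_add_le _ _).trans (add_le_add ?_ ?_)
  · rw [smul_comm, norm_smul]
    exact mul_le_of_le_one_left (norm_nonneg _) (abs_originCutoff_le_one k x)
  · calc ‖c • fderiv ℝ (originCutoff k) x v • g x‖
        = ‖fderiv ℝ (originCutoff k) x v‖ * (‖c‖ * ‖g x‖) := by
          rw [norm_smul, norm_smul]; ring
      _ ≤ C * ‖x‖⁻¹ * ‖v‖ * (‖c‖ * ‖g x‖) := by
          gcongr
          exact (fderiv ℝ (originCutoff k) x).le_of_opNorm_le hC v
      _ = _ := by rw [norm_smul, norm_mul, norm_inv, norm_norm]; ring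

variable [MeasurableSpace E] [BorelSpace E] {μ : Measure E}

theorem integrable_fderiv_apply_smul_of_locallyIntegrable {u : E → ℝ}
    (hu' : LocallyIntegrable (fderiv ℝ u) μ) {g : E → F} (hg : Continuous g)
    (hgc : HasCompactSupport g) (v : E) : Integrable (fun x ↦ fderiv ℝ u x v • g x) μ := by
  have hv : LocallyIntegrable (fun x ↦ fderiv ℝ u x v) μ := fun x ↦
    let ⟨s, hs, hint⟩ := hu' x
    ⟨s, hs, hint.apply_continuousLinearMap v⟩
  exact hv.integrable_smul_right_of_hasCompactSupport hg hgc

variable [FiniteDimensional ℝ E] [Nontrivial E] [μ.IsAddHaarMeasure]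

theorem integrable_smul_of_locallyIntegrable_inv_norm_mul {u : E → ℝ}
    (hu : LocallyIntegrable (fun x ↦ ‖x‖⁻¹ * u x) μ) {g : E → F} (hg : Continuous g)
    (hgc : HasCompactSupport g) : Integrable (fun x ↦ u x • g x) μ := by
  refine (hu.integrable_smul_right_of_hasCompactSupport (continuous_norm.smul hg)
    hgc.smul_left).congr ?_
  filter_upwards [Measure.ae_ne μ 0] with x hx
  rw [Pi.smul_apply', smul_smul, mul_right_comm, inv_mul_cancel₀ (norm_ne_zero_iff.2 hx), one_mul]

theorem integral_smul_fderiv_originCutoff_smul {u : E → ℝ}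
    (hu : ∀ x ≠ 0, DifferentiableAt ℝ u x)
    (hu_int : LocallyIntegrable (fun x ↦ ‖x‖⁻¹ * u x) μ)
    (hu'_int : LocallyIntegrable (fderiv ℝ u) μ)
    {g : E → F} (hg : ContDiff ℝ 1 g) (hgc : HasCompactSupport g) (k : ℕ) (v : E) :
    ∫ x, u x • fderiv ℝ (fun x ↦ originCutoff k x • g x) x v ∂μ
      = -∫ x, fderiv ℝ u x v • (originCutoff k x • g x) ∂μ := by
  have hη : ContDiff ℝ 1 fun x : E ↦ originCutoff k x • g x :=
    (contDiff_originCutoff (n := 1) k).smul hg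
  have hηc : HasCompactSupport fun x : E ↦ originCutoff k x • g x := hgc.smul_left
  have hη' : Continuous fun x ↦ fderiv ℝ (fun x ↦ originCutoff k x • g x) x v :=
    (hη.continuous_fderiv one_ne_zero).clm_apply continuous_const
  refine integral_smul_fderiv_eq_neg_fderiv_smul_of_integrable
    (integrable_fderiv_apply_smul_of_locallyIntegrable hu'_int hη.continuous hηc v)
    (integrable_smul_of_locallyIntegrable_inv_norm_mul hu_int hη' (hηc.fderiv_apply ℝ v))
    (integrable_smul_of_locallyIntegrable_inv_norm_mul hu_int hη.continuous hηc)
    (fun x hx ↦ hu x ?_) fun x _ ↦ (hη.differentiable one_ne_zero).differentiableAt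
  rintro rfl
  exact zero_notMem_tsupport_originCutoff k (tsupport_smul_subset_left _ _ hx)

theorem tendsto_integral_smul_fderiv_originCutoff_smul {u : E → ℝ}
    (hu : LocallyIntegrable (fun x ↦ ‖x‖⁻¹ * u x) μ)
    {g : E → F} (hg : ContDiff ℝ 1 g) (hgc : HasCompactSupport g) (v : E) :
    Tendsto (fun k ↦ ∫ x, u x • fderiv ℝ (fun x ↦ originCutoff k x • g x) x v ∂μ) atTop
      (𝓝 (∫ x, u x • fderiv ℝ g x v ∂μ)) := by
  obtain ⟨C, hC⟩ := exists_norm_fderiv_originCutoff_le (E := E)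
  have hg' : Continuous fun x ↦ fderiv ℝ g x v :=
    (hg.continuous_fderiv one_ne_zero).clm_apply continuous_const
  have hη (k : ℕ) : ContDiff ℝ 1 fun x : E ↦ originCutoff k x • g x :=
    (contDiff_originCutoff (n := 1) k).smul hg
  have hη' (k : ℕ) : Continuous fun x ↦ fderiv ℝ (fun x ↦ originCutoff k x • g x) x v :=
    ((hη k).continuous_fderiv one_ne_zero).clm_apply continuous_const
  -- The gradients of the cutoffs grow like `‖x‖⁻¹`; the integrability of `‖x‖⁻¹ * u` absorbs them.
  refine tendsto_integral_of_dominated_convergence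
    (fun x ↦ ‖u x • fderiv ℝ g x v‖ + C * ‖v‖ * ‖(‖x‖⁻¹ * u x) • g x‖)
    (fun k ↦ (integrable_smul_of_locallyIntegrable_inv_norm_mul hu (hη' k)
      (hgc.smul_left.fderiv_apply ℝ v)).aestronglyMeasurable)
    ((integrable_smul_of_locallyIntegrable_inv_norm_mul hu hg' (hgc.fderiv_apply ℝ v)).norm.add
      ((hu.integrable_smul_right_of_hasCompactSupport hg.continuous hgc).norm.const_mul _))
    (fun k ↦ ?_) ?_
  · filter_upwards [μ.ae_ne 0] with x hx
    exact norm_smul_fderiv_originCutoff_smul_le (hC k x hx)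
      (hg.differentiable one_ne_zero).differentiableAt _ v
  · filter_upwards [μ.ae_ne 0] with x hx
    refine tendsto_const_nhds.congr' ?_
    filter_upwards [eventually_originCutoff_eventuallyEq_one hx] with k hk
    have hkg : (fun x ↦ originCutoff k x • g x) =ᶠ[𝓝 x] g :=
      hk.mono fun z hz ↦ by simp [hz]
    rw [hkg.fderiv_eq]

theorem tendsto_integral_fderiv_apply_smul_originCutoff_smul {u : E → ℝ}
    (hu' : LocallyIntegrable (fderiv ℝ u) μ) {g : E → F} (hg : Continuous g)
    (hgc : HasCompactSupport g) (v : E) :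
    Tendsto (fun k ↦ ∫ x, fderiv ℝ u x v • (originCutoff k x • g x) ∂μ) atTop
      (𝓝 (∫ x, fderiv ℝ u x v • g x ∂μ)) := by
  refine tendsto_integral_of_dominated_convergence (fun x ↦ ‖fderiv ℝ u x v • g x‖)
    (fun k ↦ (integrable_fderiv_apply_smul_of_locallyIntegrable hu'
      ((contDiff_originCutoff (n := 1) k).continuous.smul hg)
      hgc.smul_left v).aestronglyMeasurable)
    (integrable_fderiv_apply_smul_of_locallyIntegrable hu' hg hgc v).norm
    (fun k ↦ .of_forall fun x ↦ ?_) ?_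
  · rw [smul_comm, norm_smul]
    exact mul_le_of_le_one_left (norm_nonneg _) (abs_originCutoff_le_one k x)
  · filter_upwards [μ.ae_ne 0] with x hx
    refine tendsto_const_nhds.congr' ?_
    filter_upwards [eventually_originCutoff_eventuallyEq_one hx] with k hk
    simp [hk.self_of_nhds]

theorem integral_smul_fderiv_eq_neg_of_differentiableAt_ne_zero {u : E → ℝ}
    (hu : ∀ x ≠ 0, DifferentiableAt ℝ u x)
    (hu_int : LocallyIntegrable (fun x ↦ ‖x‖⁻¹ * u x) μ)
    (hu'_int : LocallyIntegrable (fderiv ℝ u) μ)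
    {g : E → F} (hg : ContDiff ℝ 1 g) (hgc : HasCompactSupport g) (v : E) :
    ∫ x, u x • fderiv ℝ g x v ∂μ = -∫ x, fderiv ℝ u x v • g x ∂μ := by
  refine tendsto_nhds_unique (tendsto_integral_smul_fderiv_originCutoff_smul hu_int hg hgc v) ?_
  simp only [integral_smul_fderiv_originCutoff_smul hu hu_int hu'_int hg hgc]
  exact (tendsto_integral_fderiv_apply_smul_originCutoff_smul hu'_int hg.continuous hgc v).neg

end WeakDerivative

/-! ### The Laplacian -/

section Laplacian

variable {E F : Type*} [NormedAddCommGroup E] [InnerProductSpace ℝ E] [FiniteDimensional ℝ E]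
  [NormedAddCommGroup F] [NormedSpace ℝ F]

theorem contDiff_laplacian {ψ : E → F} {n : WithTop ℕ∞} (hψ : ContDiff ℝ (n + 2) ψ) :
    ContDiff ℝ n (Δ ψ) := by
  rw [laplacian_eq_iteratedFDeriv_stdOrthonormalBasis]
  have hψ2 : ContDiff ℝ n (iteratedFDeriv ℝ 2 ψ) := hψ.iteratedFDeriv_right le_rfl
  exact ContDiff.sum fun i _ ↦
    (ContinuousMultilinearMap.apply ℝ (fun _ : Fin 2 ↦ E) F _).contDiff.comp hψ2

theorem hasCompactSupport_laplacian {ψ : E → F} (hψ : HasCompactSupport ψ) :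
    HasCompactSupport (Δ ψ) := by
  refine (hψ.iteratedFDeriv (𝕜 := ℝ) 2).mono fun x hx h ↦ hx ?_
  simp [laplacian_eq_iteratedFDeriv_stdOrthonormalBasis, h]

theorem laplacian_comp_add_right (ψ : E → F) (a x : E) :
    Δ (fun z ↦ ψ (z + a)) x = Δ ψ (x + a) := by
  simp [laplacian_eq_iteratedFDeriv_stdOrthonormalBasis, iteratedFDeriv_comp_add_right]

theorem laplacian_eq_sum_fderiv_fderiv {ι : Type*} [Fintype ι] (b : OrthonormalBasis ι ℝ E)
    {ψ : E → F} (hψ : ContDiff ℝ 2 ψ) (x : E) :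
    Δ ψ x = ∑ i, fderiv ℝ (fun z ↦ fderiv ℝ ψ z (b i)) x (b i) := by
  have hd : DifferentiableAt ℝ (fderiv ℝ ψ) x :=
    ((hψ.fderiv_right (m := 1) le_rfl).differentiable one_ne_zero).differentiableAt
  simp [laplacian_eq_iteratedFDeriv_orthonormalBasis ψ b, iteratedFDeriv_two_apply,
    fderiv_clm_apply hd (differentiableAt_const _)]

variable [MeasurableSpace E] [BorelSpace E] {μ : Measure E} [μ.IsAddHaarMeasure] [Nontrivial E]

theorem integral_smul_laplacian_eq_neg_integral_sum {ι : Type*} [Fintype ι]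
    (b : OrthonormalBasis ι ℝ E) {u : E → ℝ} (hu : ∀ x ≠ 0, DifferentiableAt ℝ u x)
    (hu_int : LocallyIntegrable (fun x ↦ ‖x‖⁻¹ * u x) μ)
    (hu'_int : LocallyIntegrable (fderiv ℝ u) μ)
    {ψ : E → F} (hψ : ContDiff ℝ 2 ψ) (hψc : HasCompactSupport ψ) :
    ∫ x, u x • Δ ψ x ∂μ = -∫ x, ∑ i, fderiv ℝ u x (b i) • fderiv ℝ ψ x (b i) ∂μ := by
  have hg (i : ι) : ContDiff ℝ 1 fun x ↦ fderiv ℝ ψ x (b i) :=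
    (hψ.fderiv_right le_rfl).clm_apply contDiff_const
  have hgc (i : ι) : HasCompactSupport fun x ↦ fderiv ℝ ψ x (b i) := hψc.fderiv_apply ℝ _
  simp only [laplacian_eq_sum_fderiv_fderiv b hψ, Finset.smul_sum]
  rw [integral_finsetSum, integral_finsetSum, ← Finset.sum_neg_distrib]
  · exact Finset.sum_congr rfl fun i _ ↦ integral_smul_fderiv_eq_neg_of_differentiableAt_ne_zero
      hu hu_int hu'_int (hg i) (hgc i) (b i)
  · exact fun i _ ↦ integrable_fderiv_apply_smul_of_locallyIntegrable hu'_int (hg i).continuous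
      (hgc i) (b i)
  · exact fun i _ ↦ integrable_smul_of_locallyIntegrable_inv_norm_mul hu_int
      (((hg i).continuous_fderiv one_ne_zero).clm_apply continuous_const)
      ((hgc i).fderiv_apply ℝ _)

end Laplacian

/-! ### Radial functions -/

section Polar

variable {E F : Type*} [NormedAddCommGroup E] [NormedSpace ℝ E]
  [NormedAddCommGroup F] [NormedSpace ℝ F]

theorem integral_Ioi_deriv_smul_add_smul_fderiv_ray [CompleteSpace F] {φ : ℝ → ℝ}
    (hφ : ContDiff ℝ 1 φ) {ψ : E → F} (hψ : ContDiff ℝ 1 ψ) (hψc : HasCompactSupport ψ) {ω : E}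
    (hω : ω ≠ 0) :
    ∫ r in Ioi (0 : ℝ), (deriv φ r • ψ (r • ω) + φ r • fderiv ℝ ψ (r • ω) ω) = -(φ 0 • ψ 0) := by
  have hray : ContDiff ℝ 1 fun r : ℝ ↦ φ r • ψ (r • ω) := by fun_prop
  have hrayc : HasCompactSupport fun r : ℝ ↦ φ r • ψ (r • ω) :=
    (hψc.comp_isClosedEmbedding (isClosedEmbedding_smul_left hω)).smul_left
  have hderiv (r : ℝ) : deriv (fun r : ℝ ↦ φ r • ψ (r • ω)) r
      = deriv φ r • ψ (r • ω) + φ r • fderiv ℝ ψ (r • ω) ω := by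
    have hφr : HasDerivAt φ (deriv φ r) r :=
      (hφ.differentiable one_ne_zero).differentiableAt.hasDerivAt
    have hψr : HasDerivAt (fun r : ℝ ↦ ψ (r • ω)) (fderiv ℝ ψ (r • ω) ω) r := by
      have hsmul : HasDerivAt (fun r : ℝ ↦ r • ω) ω r := by
        simpa using (hasDerivAt_id r).smul_const ω
      exact (hψ.differentiable one_ne_zero).differentiableAt.hasFDerivAt.comp_hasDerivAt r hsmul
    rw [(hφr.fun_smul hψr).deriv, add_comm]
  simp only [← hderiv]
  simpa using hrayc.integral_Ioi_deriv_eq hray 0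

variable [FiniteDimensional ℝ E] [MeasurableSpace E] [BorelSpace E] {μ : Measure E}
  [μ.IsAddHaarMeasure]

theorem locallyIntegrable_inv_norm_pow {m : ℕ} (hm : m < finrank ℝ E) :
    LocallyIntegrable (fun x : E ↦ (‖x‖ ^ m)⁻¹) μ := by
  refine locallyIntegrable_of_norm_le_rpow (C := 1) (α := m) (by lia) (mod_cast hm)
    (.of_forall fun x ↦ ?_) (by fun_prop)
  simp [rpow_neg]

variable [Nontrivial E]

theorem integral_eq_integral_sphere_integral_Ioi {f : E → F} (hf : Integrable f μ) :
    ∫ x, f x ∂μ = ∫ ω : sphere (0 : E) 1,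
      (∫ r in Ioi (0 : ℝ), r ^ (finrank ℝ E - 1) • f (r • (ω : E))) ∂μ.toSphere := by
  have hmp := μ.measurePreserving_homeomorphUnitSphereProd
  have hemb := (homeomorphUnitSphereProd E).measurableEmbedding
  let g : sphere (0 : E) 1 × Ioi (0 : ℝ) → F := fun p ↦ f ((p.2 : ℝ) • (p.1 : E))
  have hfg (x : ({0}ᶜ : Set E)) : f x = g (homeomorphUnitSphereProd E x) := by
    have hx : ‖(x : E)‖ ≠ 0 := norm_ne_zero_iff.2 x.2
    simp [g, smul_smul, hx]
  have hg : Integrable g (μ.toSphere.prod (.volumeIoiPow (finrank ℝ E - 1))) := by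
    rw [← hmp.integrable_comp_emb hemb]
    have hf' : IntegrableOn f {0}ᶜ μ := hf.integrableOn
    rw [integrableOn_iff_comap_subtypeVal (measurableSet_singleton _).compl] at hf'
    exact hf'.congr (.of_forall hfg)
  calc
    ∫ x, f x ∂μ = ∫ x : ({0}ᶜ : Set E), f x ∂(μ.comap Subtype.val) := by
      rw [integral_subtype_comap (measurableSet_singleton _).compl f, restrict_compl_singleton]
    _ = ∫ p, g p ∂(μ.toSphere.prod (.volumeIoiPow (finrank ℝ E - 1))) := by
      rw [← hmp.integral_comp hemb]
      exact integral_congr_ae (.of_forall hfg)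
    _ = _ := by
      rw [integral_prod _ hg]
      refine integral_congr_ae (.of_forall fun ω ↦ ?_)
      simp only [Measure.volumeIoiPow, ENNReal.ofReal]
      rw [integral_withDensity_eq_integral_smul
          (measurable_subtype_coe.pow_const _).real_toNNReal,
        integral_subtype_comap measurableSet_Ioi fun r : ℝ ↦
          Real.toNNReal (r ^ (finrank ℝ E - 1)) • f (r • (ω : E))]
      refine setIntegral_congr_fun measurableSet_Ioi fun r hr ↦ ?_
      simp only [NNReal.smul_def, Real.coe_toNNReal _ (pow_nonneg (mem_Ioi.1 hr).le _)]

theorem integrable_div_norm_pow_smul {q : ℝ → ℝ} (hq : Continuous q) {g : E → F}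
    (hg : Continuous g) (hgc : HasCompactSupport g) :
    Integrable (fun x ↦ (q ‖x‖ / ‖x‖ ^ (finrank ℝ E - 1)) • g x) μ := by
  have hdim : finrank ℝ E - 1 < finrank ℝ E := Nat.sub_one_lt finrank_pos.ne'
  have hq' : Continuous fun x : E ↦ q ‖x‖ := hq.comp continuous_norm
  refine ((locallyIntegrable_inv_norm_pow hdim).integrable_smul_right_of_hasCompactSupport
    (hq'.smul hg) hgc.smul_left).congr (.of_forall fun x ↦ ?_)
  simp [smul_smul, div_eq_inv_mul]

theorem integrable_div_norm_pow_smul_fderiv_self {q : ℝ → ℝ} (hq : Continuous q) {ψ : E → F}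
    (hψ : ContDiff ℝ 1 ψ) (hψc : HasCompactSupport ψ) :
    Integrable (fun x ↦ (q ‖x‖ / ‖x‖ ^ finrank ℝ E) • fderiv ℝ ψ x x) μ := by
  have hψ' : Continuous (fderiv ℝ ψ) := hψ.continuous_fderiv one_ne_zero
  have hmeas : AEStronglyMeasurable (fun x ↦ (q ‖x‖ / ‖x‖ ^ finrank ℝ E) • fderiv ℝ ψ x x) μ := by
    refine AEStronglyMeasurable.smul (Measurable.aestronglyMeasurable ?_)
      (hψ'.clm_apply continuous_id).aestronglyMeasurable
    exact (hq.comp continuous_norm).measurable.div (by fun_prop)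
  refine (integrable_div_norm_pow_smul hq hψ' (hψc.fderiv ℝ)).mono hmeas (.of_forall fun x ↦ ?_)
  rw [norm_smul, norm_smul, ← pow_sub_one_mul finrank_pos.ne', ← div_div, norm_div _ ‖x‖,
    norm_norm, div_mul_eq_mul_div, mul_div_assoc]
  gcongr
  exact div_le_of_le_mul₀ (norm_nonneg _) (norm_nonneg _) ((fderiv ℝ ψ x).le_opNorm x)

theorem integral_div_norm_pow_smul_fderiv_self [CompleteSpace F] {φ : ℝ → ℝ} (hφ : ContDiff ℝ 1 φ)
    {ψ : E → F} (hψ : ContDiff ℝ 1 ψ) (hψc : HasCompactSupport ψ) :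
    ∫ x, (φ ‖x‖ / ‖x‖ ^ finrank ℝ E) • fderiv ℝ ψ x x ∂μ
      = -(∫ x, (deriv φ ‖x‖ / ‖x‖ ^ (finrank ℝ E - 1)) • ψ x ∂μ
        + (μ.toSphere.real univ * φ 0) • ψ 0) := by
  have hint := integrable_div_norm_pow_smul (μ := μ) (hφ.continuous_deriv le_rfl) hψ.continuous hψc
  have hint' := integrable_div_norm_pow_smul_fderiv_self (μ := μ) hφ.continuous hψ hψc
  have hray (ω : sphere (0 : E) 1) : ∫ r in Ioi (0 : ℝ), r ^ (finrank ℝ E - 1) •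
      ((deriv φ ‖r • (ω : E)‖ / ‖r • (ω : E)‖ ^ (finrank ℝ E - 1)) • ψ (r • (ω : E))
        + (φ ‖r • (ω : E)‖ / ‖r • (ω : E)‖ ^ finrank ℝ E)
          • fderiv ℝ ψ (r • (ω : E)) (r • (ω : E))) = -(φ 0 • ψ 0) := by
    rw [← integral_Ioi_deriv_smul_add_smul_fderiv_ray hφ hψ hψc (ne_zero_of_mem_unit_sphere ω)]
    refine setIntegral_congr_fun measurableSet_Ioi fun r (hr : 0 < r) ↦ ?_
    have hr' : r ^ (finrank ℝ E - 1) ≠ 0 := pow_ne_zero _ hr.ne'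
    simp only [norm_smul, norm_eq_of_mem_sphere, mul_one, norm_of_nonneg hr.le, smul_add, smul_smul,
      map_smul, ← pow_sub_one_mul (finrank_pos (R := ℝ) (M := E)).ne' r]
    congr 2 <;> field_simp
  have hpolar := integral_eq_integral_sphere_integral_Ioi (hint.add hint')
  simp only [Pi.add_apply, hray, integral_const, integral_add hint hint'] at hpolar
  rw [mul_smul, neg_add, ← smul_neg, ← hpolar, neg_add_cancel_left]

end Polar

section Radial

variable {E F : Type*} [NormedAddCommGroup E] [InnerProductSpace ℝ E]
  [NormedAddCommGroup F] [NormedSpace ℝ F]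

theorem hasFDerivAt_comp_norm {f : ℝ → ℝ} {f' : ℝ} {x : E} (hx : x ≠ 0)
    (hf : HasDerivAt f f' ‖x‖) :
    HasFDerivAt (fun z ↦ f ‖z‖) ((f' / ‖x‖) • innerSL ℝ x) x := by
  have hsqrt : HasFDerivAt (fun z : E ↦ √(‖z‖ ^ 2)) ((1 / ‖x‖) • innerSL ℝ x) x := by
    refine ((hasStrictFDerivAt_norm_sq x).hasFDerivAt.sqrt (by simpa)).congr_fderiv ?_
    rw [sqrt_sq (norm_nonneg x), ← Nat.cast_smul_eq_nsmul ℝ, smul_smul]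
    congr 1
    field_simp
    simp
  simp only [sqrt_sq (norm_nonneg _)] at hsqrt
  refine (hf.comp_hasFDerivAt x hsqrt).congr_fderiv ?_
  rw [smul_smul, mul_one_div]

variable [FiniteDimensional ℝ E] [Nontrivial E]

theorem fderiv_radial {f φ : ℝ → ℝ}
    (hf : ∀ r > 0, HasDerivAt f (φ r / r ^ (finrank ℝ E - 1)) r) {x : E} (hx : x ≠ 0) :
    fderiv ℝ (fun z ↦ f ‖z‖) x = (φ ‖x‖ / ‖x‖ ^ finrank ℝ E) • innerSL ℝ x := by
  rw [(hasFDerivAt_comp_norm hx (hf ‖x‖ (norm_pos_iff.2 hx))).fderiv, div_div,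
    pow_sub_one_mul finrank_pos.ne']

theorem sum_fderiv_radial_smul {ι : Type*} [Fintype ι] (b : OrthonormalBasis ι ℝ E) {f φ : ℝ → ℝ}
    (hf : ∀ r > 0, HasDerivAt f (φ r / r ^ (finrank ℝ E - 1)) r) (L : E →L[ℝ] F) {x : E}
    (hx : x ≠ 0) :
    ∑ i, fderiv ℝ (fun z ↦ f ‖z‖) x (b i) • L (b i) = (φ ‖x‖ / ‖x‖ ^ finrank ℝ E) • L x := by
  have hL : L x = ∑ i, inner ℝ x (b i) • L (b i) := by
    conv_lhs => rw [← b.sum_repr' x]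
    simp [real_inner_comm]
  simp [fderiv_radial hf hx, hL, Finset.smul_sum, smul_smul]

variable [MeasurableSpace E] [BorelSpace E] {μ : Measure E} [μ.IsAddHaarMeasure]

theorem locallyIntegrable_fderiv_radial {f φ : ℝ → ℝ} (hφ : Continuous φ)
    (hf : ∀ r > 0, HasDerivAt f (φ r / r ^ (finrank ℝ E - 1)) r) :
    LocallyIntegrable (fderiv ℝ fun x : E ↦ f ‖x‖) μ := by
  have hdim : finrank ℝ E - 1 < finrank ℝ E := Nat.sub_one_lt finrank_pos.ne'
  have hφ' : Continuous fun x : E ↦ φ ‖x‖ := hφ.comp continuous_norm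
  refine ((locallyIntegrable_inv_norm_pow hdim).continuous_mul hφ').mono
    (measurable_fderiv ℝ _).aestronglyMeasurable ?_
  filter_upwards [μ.ae_ne 0] with x hx
  have hx' : ‖x‖ ≠ 0 := norm_ne_zero_iff.2 hx
  rw [fderiv_radial hf hx, norm_smul, innerSL_apply_norm, ← pow_sub_one_mul finrank_pos.ne',
    ← div_div, norm_div _ ‖x‖, norm_norm, div_mul_cancel₀ _ hx', div_eq_mul_inv]

theorem integral_radial_smul_laplacian [CompleteSpace F] {f φ : ℝ → ℝ} (hφ : ContDiff ℝ 1 φ)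
    (hf : ∀ r > 0, HasDerivAt f (φ r / r ^ (finrank ℝ E - 1)) r)
    (hf_int : LocallyIntegrable (fun x : E ↦ ‖x‖⁻¹ * f ‖x‖) μ)
    {ψ : E → F} (hψ : ContDiff ℝ 2 ψ) (hψc : HasCompactSupport ψ) :
    ∫ x, f ‖x‖ • Δ ψ x ∂μ = ∫ x, (deriv φ ‖x‖ / ‖x‖ ^ (finrank ℝ E - 1)) • ψ x ∂μ
      + (μ.toSphere.real univ * φ 0) • ψ 0 := by
  have hdiff (x : E) (hx : x ≠ 0) : DifferentiableAt ℝ (fun z ↦ f ‖z‖) x :=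
    (hasFDerivAt_comp_norm hx (hf ‖x‖ (norm_pos_iff.2 hx))).differentiableAt
  rw [integral_smul_laplacian_eq_neg_integral_sum (stdOrthonormalBasis ℝ E) hdiff hf_int
      (locallyIntegrable_fderiv_radial hφ.continuous hf) hψ hψc,
    ← neg_eq_iff_eq_neg.2 (integral_div_norm_pow_smul_fderiv_self hφ (hψ.of_le one_le_two) hψc)]
  congr 1
  refine integral_congr_ae ?_
  filter_upwards [μ.ae_ne 0] with x hx
  exact sum_fderiv_radial_smul _ hf _ hx

end Radial

/-! ### The Yukawa and Bopp–Podolsky kernels -/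

section Kernel

local notation "E3" => EuclideanSpace ℝ (Fin 3)

theorem measureReal_toSphere_euclideanSpace_three :
    (volume : Measure E3).toSphere.real univ = 4 * π := by
  rw [Measure.toSphere_real_apply_univ, Measure.real, EuclideanSpace.volume_ball_fin_three]
  simp [ENNReal.toReal_ofReal (by positivity : 0 ≤ π * 4 / 3)]
  ring

variable {F : Type*} [NormedAddCommGroup F] [NormedSpace ℝ F]

theorem locallyIntegrable_inv_norm_mul_div {p : ℝ → ℝ} (hp : Continuous p) :
    LocallyIntegrable fun x : E3 ↦ ‖x‖⁻¹ * (p ‖x‖ / (4 * π * ‖x‖)) := by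
  have hp' : Continuous fun x : E3 ↦ p ‖x‖ / (4 * π) := by fun_prop
  refine ((locallyIntegrable_inv_norm_pow (m := 2) (by simp)).continuous_mul hp').congr
    (.of_forall fun x ↦ ?_)
  simp only [div_eq_mul_inv, mul_inv]
  ring

theorem integral_div_norm_smul_laplacian [CompleteSpace F] {p : ℝ → ℝ} (hp : ContDiff ℝ 2 p)
    {ψ : E3 → F} (hψ : ContDiff ℝ 2 ψ) (hψc : HasCompactSupport ψ) :
    ∫ x : E3, (p ‖x‖ / (4 * π * ‖x‖)) • Δ ψ x
      = (∫ x : E3, (deriv (deriv p) ‖x‖ / (4 * π * ‖x‖)) • ψ x) - p 0 • ψ 0 := by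
  have hp' : ContDiff ℝ 1 (deriv p) := hp.deriv'
  have hderiv (r : ℝ) : HasDerivAt p (deriv p r) r :=
    (hp.differentiable two_ne_zero).differentiableAt.hasDerivAt
  have hderiv' (r : ℝ) : HasDerivAt (deriv p) (deriv (deriv p) r) r :=
    (hp'.differentiable one_ne_zero).differentiableAt.hasDerivAt
  let φ (r : ℝ) : ℝ := (r * deriv p r - p r) / (4 * π)
  have hφ : ContDiff ℝ 1 φ :=
    ((contDiff_id.mul hp').sub (hp.of_le one_le_two)).div_const _
  have hφ' (r : ℝ) : deriv φ r = r * deriv (deriv p) r / (4 * π) := by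
    rw [((((hasDerivAt_id' r).fun_mul (hderiv' r)).fun_sub (hderiv r)).div_const _).deriv]
    ring
  have hφ0 : 4 * π * φ 0 = -p 0 := by
    simp only [φ]
    field_simp
    ring
  have hf (r : ℝ) (hr : r > 0) : HasDerivAt (fun r ↦ p r / (4 * π * r))
      (φ r / r ^ (finrank ℝ E3 - 1)) r := by
    have hpi : 4 * π * r ≠ 0 := by positivity
    refine ((hderiv r).fun_div ((hasDerivAt_id' r).const_mul (4 * π)) hpi).congr_deriv ?_
    simp only [φ, finrank_euclideanSpace_fin, Nat.reduceSub]
    field_simp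
  rw [integral_radial_smul_laplacian hφ hf (locallyIntegrable_inv_norm_mul_div hp.continuous)
    hψ hψc, measureReal_toSphere_euclideanSpace_three, hφ0, neg_smul, ← sub_eq_add_neg]
  congr 2 with x
  rw [hφ', finrank_euclideanSpace_fin, Nat.add_one_sub_one]
  rcases eq_or_ne x 0 with rfl | hx
  · simp
  · have hx' : ‖x‖ ≠ 0 := norm_ne_zero_iff.2 hx
    congr 1
    field_simp

/-- The Yukawa kernel with screening length `a`, a fundamental solution of `a⁻² - Δ` on `ℝ³`; the
Laplacian of the Bopp–Podolsky kernel is a multiple of it. -/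
noncomputable def yukawaKernel (a : ℝ) (x : E3) : ℝ :=
  exp (-‖x‖ / a) / (4 * π * ‖x‖)

theorem integrable_yukawaKernel_smul (a : ℝ) {g : E3 → F} (hg : Continuous g)
    (hgc : HasCompactSupport g) : Integrable fun x ↦ yukawaKernel a x • g x :=
  integrable_smul_of_locallyIntegrable_inv_norm_mul
    (locallyIntegrable_inv_norm_mul_div (p := fun r ↦ exp (-r / a)) (by fun_prop)) hg hgc

theorem deriv_exp_neg_div (a : ℝ) :
    deriv (fun r ↦ exp (-r / a)) = fun r ↦ -(a⁻¹ * exp (-r / a)) := by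
  ext r
  rw [((hasDerivAt_neg r).div_const a).exp.deriv]
  ring

theorem deriv_deriv_exp_neg_div (a : ℝ) :
    deriv (deriv fun r ↦ exp (-r / a)) = fun r ↦ a⁻¹ ^ 2 * exp (-r / a) := by
  ext r
  simp only [deriv_exp_neg_div, deriv.fun_neg, deriv_const_mul_field]
  ring

theorem integral_yukawaKernel_smul_laplacian [CompleteSpace F] (a : ℝ) {ψ : E3 → F}
    (hψ : ContDiff ℝ 2 ψ) (hψc : HasCompactSupport ψ) :
    ∫ x, yukawaKernel a x • Δ ψ x = a⁻¹ ^ 2 • (∫ x, yukawaKernel a x • ψ x) - ψ 0 := by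
  have h := integral_div_norm_smul_laplacian (p := fun r ↦ exp (-r / a)) (by fun_prop) hψ hψc
  simpa [deriv_deriv_exp_neg_div, mul_div_assoc, mul_smul, yukawaKernel, ← integral_smul] using h

theorem integral_bpKernel_smul_laplacian [CompleteSpace F] (a : ℝ) {ψ : E3 → F}
    (hψ : ContDiff ℝ 2 ψ) (hψc : HasCompactSupport ψ) :
    ∫ x, BPkernel a x • Δ ψ x = -(a⁻¹ ^ 2 • ∫ x, yukawaKernel a x • ψ x) := by
  have hderiv : deriv (deriv fun r ↦ 1 - exp (-r / a)) = fun r ↦ -(a⁻¹ ^ 2 * exp (-r / a)) := by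
    simp only [deriv_const_sub', deriv.fun_neg', deriv_deriv_exp_neg_div]
  have hzero : 1 - exp (-0 / a) = 0 := by simp
  rw [← integral_smul, ← integral_neg]
  refine (integral_div_norm_smul_laplacian (p := fun r ↦ 1 - exp (-r / a)) (by fun_prop) hψ
    hψc).trans ?_
  simp only [hderiv, hzero, zero_smul, sub_zero, yukawaKernel, smul_smul, ← mul_div_assoc,
    ← neg_smul, ← neg_div]

theorem integral_bpKernel_smul_neg_laplacian_add [CompleteSpace F] {a : ℝ} (ha : a ≠ 0)
    {ψ : E3 → F} (hψ : ContDiff ℝ 4 ψ) (hψc : HasCompactSupport ψ) :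
    ∫ x, BPkernel a x • (-Δ ψ x + a ^ 2 • Δ (Δ ψ) x) = ψ 0 := by
  have hψ2 : ContDiff ℝ 2 ψ := hψ.of_le (by norm_num)
  have hΔψ : ContDiff ℝ 2 (Δ ψ) := contDiff_laplacian (n := 2) hψ
  have hΔψc : HasCompactSupport (Δ ψ) := hasCompactSupport_laplacian hψc
  have haΔψ : ContDiff ℝ 2 (a ^ 2 • Δ ψ) := hΔψ.const_smul _
  have hΔχ (x : E3) : -Δ ψ x + a ^ 2 • Δ (Δ ψ) x = Δ (a ^ 2 • Δ ψ - ψ) x := by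
    rw [haΔψ.contDiffAt.laplacian_sub hψ2.contDiffAt, laplacian_smul _ hΔψ.contDiffAt]
    abel
  have hχc : HasCompactSupport (a ^ 2 • Δ ψ - ψ) := by
    rw [sub_eq_add_neg]
    exact HasCompactSupport.add (hΔψc.smul_left (f := fun _ ↦ a ^ 2)) hψc.neg
  have hY := integrable_yukawaKernel_smul a hψ.continuous hψc
  have hYΔ := integrable_yukawaKernel_smul a hΔψ.continuous hΔψc
  calc
    ∫ x, BPkernel a x • (-Δ ψ x + a ^ 2 • Δ (Δ ψ) x)
      = -(a⁻¹ ^ 2 • ∫ x, yukawaKernel a x • (a ^ 2 • Δ ψ x - ψ x)) := by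
        simp only [hΔχ]
        exact integral_bpKernel_smul_laplacian a (haΔψ.sub hψ2) hχc
    _ = -(a⁻¹ ^ 2 • (a ^ 2 • (∫ x, yukawaKernel a x • Δ ψ x)
          - ∫ x, yukawaKernel a x • ψ x)) := by
        simp only [smul_sub (yukawaKernel a _), smul_comm (yukawaKernel a _) (a ^ 2)]
        rw [integral_sub ?_ hY, integral_smul]
        exact hYΔ.smul (a ^ 2)
    _ = ψ 0 := by
        have ha2 : a⁻¹ ^ 2 * a ^ 2 = 1 := by field_simp
        rw [integral_yukawaKernel_smul_laplacian a hψ2 hψc, smul_sub, smul_smul, ha2, one_smul]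
        abel

theorem bpKernel_fundamental_solution_general [CompleteSpace F] {a : ℝ} (ha : a ≠ 0) (y : E3)
    {ψ : E3 → F} (hψ : ContDiff ℝ 4 ψ) (hψc : HasCompactSupport ψ) :
    ∫ x, BPkernel a (x - y) • (-Δ ψ x + a ^ 2 • Δ (Δ ψ) x) = ψ y := by
  have hψy : ContDiff ℝ 4 fun x ↦ ψ (x + y) := hψ.comp (contDiff_id.add contDiff_const)
  have hψyc : HasCompactSupport fun x ↦ ψ (x + y) :=
    hψc.comp_homeomorph (Homeomorph.addRight y)
  have hΔψy : Δ (fun x ↦ ψ (x + y)) = fun x ↦ Δ ψ (x + y) :=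
    funext (laplacian_comp_add_right ψ y)
  rw [← integral_add_right_eq_self _ y]
  simpa [hΔψy, laplacian_comp_add_right] using integral_bpKernel_smul_neg_laplacian_add ha hψy hψyc

theorem lap_eq_laplacian (ψ : E3 → ℝ) : lap ψ = Δ ψ := by
  rw [laplacian_eq_iteratedFDeriv_orthonormalBasis ψ (EuclideanSpace.basisFun (Fin 3) ℝ)]
  simp [lap, funext_iff]

end Kernel

end FundamentalSolution

/-- For `a > 0` and any `y ∈ ℝ³`, the translated kernel `𝒦_a(· - y)` is a distributional
solution of `-Δφ + a²Δ²φ = δ_y`: tested against any smooth compactly supported `ψ`,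
`∫ 𝒦_a(x - y)(-Δψ(x) + a²Δ²ψ(x)) dx = ψ(y)`. -/
theorem bpKernel_fundamental_solution (a : ℝ) (ha : 0 < a)
    (y : EuclideanSpace ℝ (Fin 3)) (ψ : EuclideanSpace ℝ (Fin 3) → ℝ)
    (hψ : ContDiff ℝ (⊤ : ℕ∞) ψ) (hψc : HasCompactSupport ψ) :
    ∫ x, BPkernel a (x - y) * (-(lap ψ x) + a ^ 2 * lap (lap ψ) x) = ψ y := by
  simpa only [lap_eq_laplacian, smul_eq_mul] using
    bpKernel_fundamental_solution_general ha.ne' y (mod_cast contDiff_infty.1 hψ 4) hψc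
end

section
/- Let p ∈ (0,1), S > 0 and k > 0. For λ > 0 define f_λ : (0,∞) → ℝ by f_λ(t) = (1/2)t² − t⁶/(6S³) − (λ/(p+1)) k t^{p+1}, and set Λ₁ := (2(1+p)/((5−p)k)) · (3(1−p)S³/(5−p))^{(1−p)/4}. Then: (i) f_{Λ₁} attains its maximum on (0,∞) at a unique point, and this maximum value equals 0; (ii) for every λ ∈ (0, Λ₁), the supremum of f_λ on (0,∞) is strictly positive, and f_λ has exactly two zeros 0 < t* < t** in (0,∞). -/
open Real

/-!
For `t > 0` one has `f_λ(t) = t ^ (p + 1) * (g(t) - λ k / (p + 1))` with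
`g(t) = t ^ (1 - p) / 2 - t ^ (5 - p) / (6 S³)`, so the sign of `f_λ` compares `g` with a constant.
A difference of powers such as `g` vanishes at `0`, increases strictly up to a peak and then
decreases strictly to `-∞`; here the peak is `t₀ = (3 (1 - p) S³ / (5 - p)) ^ (1 / 4)`, and `Λ₁` is
the parameter whose level `Λ₁ k / (p + 1)` equals `g(t₀)`. At this level only the peak is a zero of
`f_λ`; a level strictly between `0` and `g(t₀)` is taken exactly once on each side of the peak.
-/

section Unimodal

open Set

lemma lt_of_strictMonoOn_Icc_of_strictAntiOn_Ici {α β : Type*} [LinearOrder α] [Preorder β]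
    {f : α → β} {a c x : α} (hmono : StrictMonoOn f (Icc a c)) (hanti : StrictAntiOn f (Ici c))
    (hx : a ≤ x) (hne : x ≠ c) : f x < f c := by
  rcases hne.lt_or_gt with hlt | hgt
  · exact hmono ⟨hx, hlt.le⟩ ⟨hx.trans hlt.le, le_rfl⟩ hlt
  · exact hanti self_mem_Ici hgt.le hgt

lemma exists_Ici_inter_preimage_eq_pair {α β : Type*}
    [ConditionallyCompleteLinearOrder α] [TopologicalSpace α] [OrderTopology α] [DenselyOrdered α]
    [LinearOrder β] [TopologicalSpace β] [OrderClosedTopology β]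
    {f : α → β} {a c d : α} {y : β} (hac : a ≤ c) (hcd : c ≤ d)
    (hcont : ContinuousOn f (Icc a d))
    (hmono : StrictMonoOn f (Icc a c)) (hanti : StrictAntiOn f (Ici c))
    (hya : f a < y) (hyc : y < f c) (hyd : f d < y) :
    ∃ t₁ ∈ Ioo a c, ∃ t₂ ∈ Ioi c, Ici a ∩ f ⁻¹' {y} = {t₁, t₂} := by
  obtain ⟨t₁, ht₁, hft₁⟩ :=
    intermediate_value_Ioo hac (hcont.mono (Icc_subset_Icc_right hcd)) ⟨hya, hyc⟩
  obtain ⟨t₂, ht₂, hft₂⟩ :=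
    intermediate_value_Ioo' hcd (hcont.mono (Icc_subset_Icc_left hac)) ⟨hyd, hyc⟩
  refine ⟨t₁, ht₁, t₂, ht₂.1, Subset.antisymm ?_ ?_⟩
  · rintro t ⟨hat, hft⟩
    rcases le_total t c with htc | hct
    · exact Or.inl (hmono.injOn ⟨hat, htc⟩ (Ioo_subset_Icc_self ht₁) (hft.trans hft₁.symm))
    · exact Or.inr (hanti.injOn hct ht₂.1.le (hft.trans hft₂.symm))
  · rintro t (rfl | rfl)
    · exact ⟨ht₁.1.le, hft₁⟩
    · exact ⟨hac.trans ht₂.1.le, hft₂⟩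

end Unimodal

/-- The difference of powers `α t ^ a - β t ^ b`. With `α = 1 / 2`, `β = (6 S³)⁻¹`, `a = 1 - p` and
`b = 5 - p` it is the function compared with the level `λ k / (p + 1)`. -/
noncomputable def rpowDiff (α β a b t : ℝ) : ℝ := α * t ^ a - β * t ^ b

namespace rpowDiff

open Set Filter

/-- The critical point of `rpowDiff α β a b` on `(0, ∞)`, the solution of
`α a = β b t ^ (b - a)`. -/
noncomputable def peak (α β a b : ℝ) : ℝ := (α * a / (β * b)) ^ (b - a)⁻¹

variable {α β a b t : ℝ}

lemma eq_rpow_mul (ht : 0 < t) : rpowDiff α β a b t = t ^ a * (α - β * t ^ (b - a)) := by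
  have hb : t ^ b = t ^ a * t ^ (b - a) := by rw [← rpow_add ht, add_sub_cancel]
  rw [rpowDiff, hb]
  ring

lemma hasDerivAt (ht : 0 < t) :
    HasDerivAt (rpowDiff α β a b) (t ^ (a - 1) * (α * a - β * b * t ^ (b - a))) t := by
  have hb : t ^ (b - 1) = t ^ (a - 1) * t ^ (b - a) := by
    rw [← rpow_add ht]
    ring_nf
  refine (((hasDerivAt_rpow_const (.inl ht.ne')).const_mul α).sub
    ((hasDerivAt_rpow_const (.inl ht.ne')).const_mul β)).congr_deriv ?_
  rw [hb]
  ring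

lemma continuous (ha : 0 ≤ a) (hb : 0 ≤ b) : Continuous (rpowDiff α β a b) :=
  ((continuous_rpow_const ha).const_mul α).sub ((continuous_rpow_const hb).const_mul β)

lemma apply_zero (ha : a ≠ 0) (hb : b ≠ 0) : rpowDiff α β a b 0 = 0 := by
  simp [rpowDiff, zero_rpow ha, zero_rpow hb]

lemma tendsto_atTop_atBot (hβ : 0 < β) (ha : 0 < a) (hab : a < b) :
    Tendsto (rpowDiff α β a b) atTop atBot := by
  have hfactor : Tendsto (fun t : ℝ => α - β * t ^ (b - a)) atTop atBot :=
    tendsto_atBot_add_const_left _ α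
      (tendsto_neg_atTop_atBot.comp ((tendsto_rpow_atTop (sub_pos.2 hab)).const_mul_atTop hβ))
  refine ((tendsto_rpow_atTop ha).atTop_mul_atBot₀ hfactor).congr' ?_
  filter_upwards [eventually_gt_atTop 0] with t ht using (eq_rpow_mul ht).symm

lemma peak_pos (hα : 0 < α) (hβ : 0 < β) (ha : 0 < a) (hb : 0 < b) : 0 < peak α β a b :=
  rpow_pos_of_pos (by positivity) _

lemma mul_peak_rpow (hα : 0 ≤ α) (hβ : 0 < β) (ha : 0 ≤ a) (hb : 0 < b) (hab : a ≠ b) :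
    β * b * peak α β a b ^ (b - a) = α * a := by
  rw [peak, rpow_inv_rpow (by positivity) (sub_ne_zero.2 hab.symm)]
  field_simp

lemma strictMonoOn (hα : 0 < α) (hβ : 0 < β) (ha : 0 < a) (hab : a < b) :
    StrictMonoOn (rpowDiff α β a b) (Icc 0 (peak α β a b)) := by
  have hb : 0 < b := ha.trans hab
  refine strictMonoOn_of_deriv_pos (convex_Icc _ _) (continuous ha.le hb.le).continuousOn
    fun t ht => ?_
  rw [interior_Icc] at ht
  have hpow : t ^ (b - a) < peak α β a b ^ (b - a) :=
    rpow_lt_rpow ht.1.le ht.2 (sub_pos.2 hab)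
  rw [(hasDerivAt ht.1).deriv, ← mul_peak_rpow hα.le hβ ha.le hb hab.ne, ← mul_sub]
  exact mul_pos (rpow_pos_of_pos ht.1 _) (mul_pos (mul_pos hβ hb) (sub_pos.2 hpow))

lemma strictAntiOn (hα : 0 < α) (hβ : 0 < β) (ha : 0 < a) (hab : a < b) :
    StrictAntiOn (rpowDiff α β a b) (Ici (peak α β a b)) := by
  have hb : 0 < b := ha.trans hab
  have hpeak : 0 < peak α β a b := peak_pos hα hβ ha hb
  refine strictAntiOn_of_deriv_neg (convex_Ici _) (continuous ha.le hb.le).continuousOn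
    fun t ht => ?_
  rw [interior_Ici, mem_Ioi] at ht
  have ht0 : 0 < t := hpeak.trans ht
  have hpow : peak α β a b ^ (b - a) < t ^ (b - a) :=
    rpow_lt_rpow hpeak.le ht (sub_pos.2 hab)
  rw [(hasDerivAt ht0).deriv, ← mul_peak_rpow hα.le hβ ha.le hb hab.ne, ← mul_sub]
  exact mul_neg_of_pos_of_neg (rpow_pos_of_pos ht0 _)
    (mul_neg_of_pos_of_neg (mul_pos hβ hb) (sub_neg.2 hpow))

lemma lt_apply_peak (hα : 0 < α) (hβ : 0 < β) (ha : 0 < a) (hab : a < b)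
    (ht : 0 ≤ t) (hne : t ≠ peak α β a b) :
    rpowDiff α β a b t < rpowDiff α β a b (peak α β a b) :=
  lt_of_strictMonoOn_Icc_of_strictAntiOn_Ici (strictMonoOn hα hβ ha hab)
    (strictAntiOn hα hβ ha hab) ht hne

lemma apply_peak (hα : 0 < α) (hβ : 0 < β) (ha : 0 < a) (hab : a < b) :
    rpowDiff α β a b (peak α β a b) =
      α * (b - a) / b * (α * a / (β * b)) ^ (a / (b - a)) := by
  have hb : 0 < b := ha.trans hab
  have hcrit : β * peak α β a b ^ (b - a) = α * a / b := by
    rw [eq_div_iff hb.ne', mul_right_comm, mul_peak_rpow hα.le hβ ha.le hb hab.ne]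
  have hpow : peak α β a b ^ a = (α * a / (β * b)) ^ (a / (b - a)) := by
    rw [peak, ← rpow_mul (by positivity), inv_mul_eq_div]
  rw [eq_rpow_mul (peak_pos hα hβ ha hb), hpow, hcrit]
  field_simp

lemma apply_peak_pos (hα : 0 < α) (hβ : 0 < β) (ha : 0 < a) (hab : a < b) :
    0 < rpowDiff α β a b (peak α β a b) := by
  have hb : 0 < b := ha.trans hab
  simpa only [apply_zero ha.ne' hb.ne'] using
    lt_apply_peak hα hβ ha hab le_rfl (peak_pos hα hβ ha hb).ne

variable {F w : ℝ → ℝ} {m : ℝ}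

lemma existsUnique_max_eq_zero (hα : 0 < α) (hβ : 0 < β) (ha : 0 < a) (hab : a < b)
    (hw : ∀ t, 0 < t → 0 < w t) (hm : m = rpowDiff α β a b (peak α β a b))
    (hF : ∀ t, 0 < t → F t = w t * (rpowDiff α β a b t - m)) :
    ∃! t₀ : ℝ, 0 < t₀ ∧ (∀ t : ℝ, 0 < t → F t ≤ F t₀) ∧ F t₀ = 0 := by
  have hpeak : 0 < peak α β a b := peak_pos hα hβ ha (ha.trans hab)
  have hF_peak : F (peak α β a b) = 0 := by rw [hF _ hpeak, hm, sub_self, mul_zero]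
  have hF_neg : ∀ t, 0 < t → t ≠ peak α β a b → F t < 0 := fun t ht hne => by
    rw [hF t ht, hm]
    exact mul_neg_of_pos_of_neg (hw t ht) (sub_neg.2 (lt_apply_peak hα hβ ha hab ht.le hne))
  refine ⟨peak α β a b, ⟨hpeak, fun t ht => ?_, hF_peak⟩, ?_⟩
  · rcases eq_or_ne t (peak α β a b) with rfl | hne
    · exact le_rfl
    · exact (hF_neg t ht hne).le.trans_eq hF_peak.symm
  · rintro t ⟨ht, -, hFt⟩
    by_contra hne
    exact (hF_neg t ht hne).ne hFt

lemma exists_pos_and_exists_two_zeros (hα : 0 < α) (hβ : 0 < β) (ha : 0 < a) (hab : a < b)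
    (hw : ∀ t, 0 < t → 0 < w t) (hm0 : 0 < m) (hm : m < rpowDiff α β a b (peak α β a b))
    (hF : ∀ t, 0 < t → F t = w t * (rpowDiff α β a b t - m)) :
    (∃ t : ℝ, 0 < t ∧ 0 < F t) ∧
    (∃ t₁ t₂ : ℝ, 0 < t₁ ∧ t₁ < t₂ ∧ F t₁ = 0 ∧ F t₂ = 0 ∧
      ∀ t : ℝ, 0 < t → F t = 0 → t = t₁ ∨ t = t₂) := by
  have hb : 0 < b := ha.trans hab
  have hpeak : 0 < peak α β a b := peak_pos hα hβ ha hb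
  have hzero : ∀ t, 0 < t → (F t = 0 ↔ rpowDiff α β a b t = m) := fun t ht => by
    rw [hF t ht, mul_eq_zero_iff_left (hw t ht).ne', sub_eq_zero]
  obtain ⟨d, hmd, hpeak_d⟩ := (((tendsto_atTop_atBot hβ ha hab).eventually_lt_atBot m).and
    (eventually_ge_atTop (peak α β a b))).exists
  obtain ⟨t₁, ht₁, t₂, ht₂, hlevel⟩ := exists_Ici_inter_preimage_eq_pair hpeak.le hpeak_d
    (continuous ha.le hb.le).continuousOn (strictMonoOn hα hβ ha hab) (strictAntiOn hα hβ ha hab)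
    ((apply_zero ha.ne' hb.ne').trans_lt hm0) hm hmd
  have hmem₁ : t₁ ∈ Ici 0 ∩ rpowDiff α β a b ⁻¹' {m} := hlevel ▸ mem_insert _ _
  have hmem₂ : t₂ ∈ Ici 0 ∩ rpowDiff α β a b ⁻¹' {m} := hlevel ▸ mem_insert_of_mem _ rfl
  refine ⟨⟨peak α β a b, hpeak, ?_⟩, t₁, t₂, ht₁.1, ht₁.2.trans ht₂, (hzero t₁ ht₁.1).2 hmem₁.2,
    (hzero t₂ (hpeak.trans ht₂)).2 hmem₂.2, fun t ht hFt => ?_⟩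
  · rw [hF _ hpeak]
    exact mul_pos (hw _ hpeak) (sub_pos.2 hm)
  · exact hlevel.subset ⟨ht.le, (hzero t ht).1 hFt⟩

end rpowDiff

lemma half_sq_sub_sextic_sub_rpow_eq_mul_rpowDiff {p S k lam t : ℝ} (ht : 0 < t) :
    (1 / 2) * t ^ 2 - t ^ 6 / (6 * S ^ 3) - (lam / (p + 1)) * k * t ^ (p + 1) =
      t ^ (p + 1) *
        (rpowDiff (1 / 2) (6 * S ^ 3)⁻¹ (1 - p) (5 - p) t - lam * k / (p + 1)) := by
  have hsq : t ^ (p + 1) * t ^ (1 - p) = t ^ 2 := by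
    rw [← rpow_add ht, ← rpow_natCast]
    ring_nf
  have hsextic : t ^ (p + 1) * t ^ (5 - p) = t ^ 6 := by
    rw [← rpow_add ht, ← rpow_natCast]
    ring_nf
  rw [rpowDiff, ← hsq, ← hsextic]
  ring

lemma criticalParameter_mul_div_eq_rpowDiff_peak {p S k : ℝ} (hp : p + 1 ≠ 0) (hp1 : p < 1)
    (hS : 0 < S) (hk : k ≠ 0) :
    (2 * (1 + p) / ((5 - p) * k)) * (3 * (1 - p) * S ^ 3 / (5 - p)) ^ ((1 - p) / 4) * k / (p + 1) =
      rpowDiff (1 / 2) (6 * S ^ 3)⁻¹ (1 - p) (5 - p)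
        (rpowDiff.peak (1 / 2) (6 * S ^ 3)⁻¹ (1 - p) (5 - p)) := by
  have hgap : 5 - p - (1 - p) = 4 := by ring
  have hratio : 1 / 2 * (1 - p) / ((6 * S ^ 3)⁻¹ * (5 - p)) =
      3 * (1 - p) * S ^ 3 / (5 - p) := by
    field_simp
    ring
  rw [rpowDiff.apply_peak one_half_pos (by positivity) (by linarith) (by linarith), hgap, hratio]
  field_simp
  ring

theorem truncation_function_structure_general (p S k : ℝ)
    (hp : p ≠ -1) (hp1 : p < 1) (hS : 0 < S) (hk : k ≠ 0) :
    let f : ℝ → ℝ → ℝ := fun lam t =>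
      (1 / 2) * t ^ 2 - t ^ 6 / (6 * S ^ 3) - (lam / (p + 1)) * k * t ^ (p + 1)
    let Λ₁ : ℝ := (2 * (1 + p) / ((5 - p) * k)) * (3 * (1 - p) * S ^ 3 / (5 - p)) ^ ((1 - p) / 4)
    (∃! t₀ : ℝ, 0 < t₀ ∧ (∀ t : ℝ, 0 < t → f Λ₁ t ≤ f Λ₁ t₀) ∧ f Λ₁ t₀ = 0) ∧
    (∀ lam : ℝ, 0 < lam → lam < Λ₁ →
      (∃ t : ℝ, 0 < t ∧ 0 < f lam t) ∧
      (∃ t₁ t₂ : ℝ, 0 < t₁ ∧ t₁ < t₂ ∧ f lam t₁ = 0 ∧ f lam t₂ = 0 ∧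
        ∀ t : ℝ, 0 < t → f lam t = 0 → t = t₁ ∨ t = t₂)) := by
  intro f Λ₁
  have ha : 0 < 1 - p := sub_pos.2 hp1
  have hab : 1 - p < 5 - p := by linarith
  have hβ : 0 < (6 * S ^ 3)⁻¹ := by positivity
  have hp_add : p + 1 ≠ 0 := fun h => hp (eq_neg_of_add_eq_zero_left h)
  have hw (t : ℝ) (ht : 0 < t) : 0 < t ^ (p + 1) := rpow_pos_of_pos ht _
  have hΛ₁ : Λ₁ * k / (p + 1) = rpowDiff (1 / 2) (6 * S ^ 3)⁻¹ (1 - p) (5 - p)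
      (rpowDiff.peak (1 / 2) (6 * S ^ 3)⁻¹ (1 - p) (5 - p)) :=
    criticalParameter_mul_div_eq_rpowDiff_peak hp_add hp1 hS hk
  refine ⟨rpowDiff.existsUnique_max_eq_zero one_half_pos hβ ha hab hw hΛ₁
    fun t ht => half_sq_sub_sextic_sub_rpow_eq_mul_rpowDiff ht, fun lam hlam hlt => ?_⟩
  have hk_div : 0 < k / (p + 1) := by
    refine pos_of_mul_pos_right ?_ (hlam.trans hlt).le
    rw [← mul_div_assoc, hΛ₁]
    exact rpowDiff.apply_peak_pos one_half_pos hβ ha hab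
  have hlevel_pos : 0 < lam * k / (p + 1) := by
    simpa only [mul_div_assoc] using mul_pos hlam hk_div
  have hlevel_lt : lam * k / (p + 1) < Λ₁ * k / (p + 1) := by
    simpa only [mul_div_assoc] using mul_lt_mul_of_pos_right hlt hk_div
  exact rpowDiff.exists_pos_and_exists_two_zeros one_half_pos hβ ha hab hw hlevel_pos
    (hlevel_lt.trans_eq hΛ₁) fun t ht => half_sq_sub_sextic_sub_rpow_eq_mul_rpowDiff ht

/-- For `p ∈ (0,1)`, `S, k > 0`, consider `f_λ(t) = (1/2)t² - t⁶/(6S³) - (λ/(p+1)) k t^{p+1}`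
on `(0,∞)` and `Λ₁ = (2(1+p)/((5-p)k)) (3(1-p)S³/(5-p))^{(1-p)/4}`. Then `f_{Λ₁}` attains its
maximum on `(0,∞)` at a unique point and the maximum value is `0`; and for `0 < λ < Λ₁`,
the supremum of `f_λ` on `(0,∞)` is strictly positive and `f_λ` has exactly two zeros
`0 < t* < t**` in `(0,∞)`. -/
theorem truncation_function_structure (p S k : ℝ)
    (hp0 : 0 < p) (hp1 : p < 1) (hS : 0 < S) (hk : 0 < k) :
    let f : ℝ → ℝ → ℝ := fun lam t =>
      (1 / 2) * t ^ 2 - t ^ 6 / (6 * S ^ 3) - (lam / (p + 1)) * k * t ^ (p + 1)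
    let Λ₁ : ℝ := (2 * (1 + p) / ((5 - p) * k)) * (3 * (1 - p) * S ^ 3 / (5 - p)) ^ ((1 - p) / 4)
    (∃! t₀ : ℝ, 0 < t₀ ∧ (∀ t : ℝ, 0 < t → f Λ₁ t ≤ f Λ₁ t₀) ∧ f Λ₁ t₀ = 0) ∧
    (∀ lam : ℝ, 0 < lam → lam < Λ₁ →
      (∃ t : ℝ, 0 < t ∧ 0 < f lam t) ∧
      (∃ t₁ t₂ : ℝ, 0 < t₁ ∧ t₁ < t₂ ∧ f lam t₁ = 0 ∧ f lam t₂ = 0 ∧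
        ∀ t : ℝ, 0 < t → f lam t = 0 → t = t₁ ∨ t = t₂)) :=
  truncation_function_structure_general p S k (by linarith) hp1 hS hk.ne'
end

section
/- Let (f_n) be a sequence of nonnegative locally integrable functions on ℝ³ and let f be a nonnegative locally integrable function on ℝ³ such that ∫_{ℝ³} f_n φ → ∫_{ℝ³} f φ for every continuous compactly supported function φ : ℝ³ → ℝ. Then for every R > 0, ∫_{B_R} f_n → ∫_{B_R} f. (This is the content of Lemma 3.4, applied there to f_n = |u_n|⁶ when no concentration occurs.) -/
open MeasureTheory Real Filter Topology

/-!
This is the portmanteau argument for vague convergence. The indicator of a compact set `K` is the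
pointwise limit of continuous compactly supported functions lying above it, and the indicator of a
relatively compact open set `U` is the pointwise limit of such functions lying below it. By
dominated convergence, `∫_K g` and `∫_U g` are therefore approximated by integrals `∫ g φ` against a
single test function `φ`. As `f i ≥ 0`, the same `φ` bounds `∫_K f i` from above, respectively
`∫_U f i` from below, by `∫ f i φ`, which tends to `∫ g φ`. If the frontier of `s` is null, the
integrals over `K = closure s` and `U = interior s` agree with those over `s`, so both bounds apply
to `∫_s f i`; the frontier of a ball is null because balls are convex.
-/

section Measurable

variable {X : Type*} [MeasurableSpace X] {μ : Measure X} {h φ : X → ℝ} {s : Set X}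

lemma setIntegral_eq_integral_mul_indicator_one (hs : MeasurableSet s) :
    ∫ x in s, h x ∂μ = ∫ x, h x * s.indicator 1 x ∂μ := by
  simp only [← integral_indicator hs, ← Set.indicator_mul_right, Pi.one_apply, mul_one]

lemma integrable_mul_indicator_one (hs : MeasurableSet s) (hh : IntegrableOn h s μ) :
    Integrable (fun x => h x * s.indicator 1 x) μ := by
  simpa only [← Set.indicator_mul_right, Pi.one_apply, mul_one] using hh.integrable_indicator hs

lemma setIntegral_le_integral_mul_of_indicator_le (hs : MeasurableSet s) (hh : 0 ≤ᵐ[μ] h)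
    (hhs : IntegrableOn h s μ) (hhφ : Integrable (fun x => h x * φ x) μ)
    (hφ : s.indicator 1 ≤ φ) : ∫ x in s, h x ∂μ ≤ ∫ x, h x * φ x ∂μ := by
  rw [setIntegral_eq_integral_mul_indicator_one hs]
  refine integral_mono_ae (integrable_mul_indicator_one hs hhs) hhφ ?_
  filter_upwards [hh] with x hx using mul_le_mul_of_nonneg_left (hφ x) hx

lemma integral_mul_le_setIntegral_of_le_indicator (hs : MeasurableSet s) (hh : 0 ≤ᵐ[μ] h)
    (hhs : IntegrableOn h s μ) (hhφ : Integrable (fun x => h x * φ x) μ)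
    (hφ : φ ≤ s.indicator 1) : ∫ x, h x * φ x ∂μ ≤ ∫ x in s, h x ∂μ := by
  rw [setIntegral_eq_integral_mul_indicator_one hs]
  refine integral_mono_ae hhφ (integrable_mul_indicator_one hs hhs) ?_
  filter_upwards [hh] with x hx using mul_le_mul_of_nonneg_left (hφ x) hx

end Measurable

section HasOuterApproxClosed

variable {X : Type*} [TopologicalSpace X] [HasOuterApproxClosed X] {s : Set X}

lemma exists_seq_continuous_tendsto_indicator_of_isClosed (hs : IsClosed s) :
    ∃ u : ℕ → X → ℝ, (∀ k, Continuous (u k)) ∧ (∀ k x, u k x ≤ 1) ∧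
      (∀ k, s.indicator 1 ≤ u k) ∧ ∀ x, Tendsto (u · x) atTop (𝓝 (s.indicator 1 x)) := by
  have coe_indicator x : ((s.indicator (fun _ => 1) x : NNReal) : ℝ) = s.indicator 1 x := by
    by_cases hx : x ∈ s <;> simp [hx]
  refine ⟨fun k x => hs.apprSeq k x, fun k => by fun_prop,
    fun k x => mod_cast HasOuterApproxClosed.apprSeq_apply_le_one hs k x, fun k x => ?_,
    fun x => ?_⟩
  · rw [← coe_indicator]
    exact NNReal.coe_le_coe.2 (HasOuterApproxClosed.indicator_le_apprSeq hs k x)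
  · rw [← coe_indicator]
    exact NNReal.tendsto_coe.2 (tendsto_pi_nhds.1 (HasOuterApproxClosed.tendsto_apprSeq hs) x)

end HasOuterApproxClosed

/-- A sequence of test functions (continuous with compact support) that converges pointwise to the
indicator of `s`. A common compactly supported dominating function is required, so that the
convergence survives integration against any locally integrable function. -/
structure IsIndicatorApprox {X : Type*} [TopologicalSpace X] (ψ : ℕ → X → ℝ) (s : Set X) :
    Prop where
  continuous : ∀ k, Continuous (ψ k)
  exists_dominating : ∃ φ : X → ℝ, Continuous φ ∧ HasCompactSupport φ ∧ ∀ k x, |ψ k x| ≤ φ x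
  tendsto : ∀ x, Tendsto (ψ · x) atTop (𝓝 (s.indicator 1 x))

section Existence

variable {X : Type*} [TopologicalSpace X] [R1Space X] [LocallyCompactSpace X]
  [HasOuterApproxClosed X] {s : Set X}

lemma exists_isIndicatorApprox_ge (hs_compact : IsCompact s) (hs_closed : IsClosed s) :
    ∃ ψ, IsIndicatorApprox ψ s ∧ ∀ k, s.indicator 1 ≤ ψ k := by
  obtain ⟨u, hu_cont, hu_le, hu_ge, hu_lim⟩ :=
    exists_seq_continuous_tendsto_indicator_of_isClosed hs_closed
  obtain ⟨χ, hχs, -, hχ_supp, hχ⟩ :=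
    exists_continuous_one_zero_of_isCompact hs_compact isClosed_empty (Set.disjoint_empty s)
  have hu_nonneg k x : 0 ≤ u k x :=
    (Set.indicator_nonneg (fun _ _ => zero_le_one) x).trans (hu_ge k x)
  have hχ_mul_indicator x : χ x * s.indicator 1 x = s.indicator 1 x := by
    by_cases hx : x ∈ s <;> simp [hx, hχs _]
  refine ⟨fun k x => χ x * u k x, ⟨fun k => by fun_prop, ⟨χ, χ.continuous, hχ_supp, fun k x => ?_⟩,
    fun x => ?_⟩, fun k x => ?_⟩
  · rw [abs_of_nonneg (mul_nonneg (hχ x).1 (hu_nonneg k x))]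
    exact mul_le_of_le_one_right (hχ x).1 (hu_le k x)
  · simpa only [hχ_mul_indicator] using (hu_lim x).const_mul (χ x)
  · rw [← hχ_mul_indicator]
    exact mul_le_mul_of_nonneg_left (hu_ge k x) (hχ x).1

lemma exists_isIndicatorApprox_le (hs_open : IsOpen s) (hs_compact : IsCompact (closure s)) :
    ∃ ψ, IsIndicatorApprox ψ s ∧ ∀ k, ψ k ≤ s.indicator 1 := by
  obtain ⟨u, hu_cont, hu_le, hu_ge, hu_lim⟩ :=
    exists_seq_continuous_tendsto_indicator_of_isClosed hs_open.isClosed_compl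
  obtain ⟨χ, hχs, -, hχ_supp, hχ⟩ :=
    exists_continuous_one_zero_of_isCompact hs_compact isClosed_empty (Set.disjoint_empty _)
  have indicator_eq x : s.indicator (1 : X → ℝ) x = 1 - sᶜ.indicator 1 x := by
    by_cases hx : x ∈ s <;> simp [hx]
  have hψ_le k x : 1 - u k x ≤ s.indicator 1 x := by
    simpa only [indicator_eq] using sub_le_sub_left (hu_ge k x) 1
  have indicator_le x : s.indicator 1 x ≤ χ x :=
    Set.indicator_le' (fun x hx => (hχs (subset_closure hx)).ge) (fun x _ => (hχ x).1) x
  refine ⟨fun k x => 1 - u k x, ⟨fun k => by fun_prop, ⟨χ, χ.continuous, hχ_supp, fun k x => ?_⟩,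
    fun x => ?_⟩, hψ_le⟩
  · rw [abs_of_nonneg (sub_nonneg.2 (hu_le k x))]
    exact (hψ_le k x).trans (indicator_le x)
  · simpa only [indicator_eq] using (hu_lim x).const_sub 1

end Existence

namespace IsIndicatorApprox

variable {X : Type*} [TopologicalSpace X] {ψ : ℕ → X → ℝ} {s : Set X}

lemma hasCompactSupport (hψ : IsIndicatorApprox ψ s) (k : ℕ) : HasCompactSupport (ψ k) := by
  obtain ⟨φ, -, hφ_supp, hφ⟩ := hψ.exists_dominating
  refine hφ_supp.mono fun x hx => ?_
  exact ((abs_pos.2 hx).trans_le (hφ k x)).ne'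

variable [T2Space X] [MeasurableSpace X] [OpensMeasurableSpace X] {μ : Measure X} {h : X → ℝ}

lemma integrable_mul (hψ : IsIndicatorApprox ψ s) (hh : LocallyIntegrable h μ) (k : ℕ) :
    Integrable (fun x => h x * ψ k x) μ :=
  hh.integrable_smul_right_of_hasCompactSupport (hψ.continuous k) (hψ.hasCompactSupport k)

lemma tendsto_integral_mul (hψ : IsIndicatorApprox ψ s) (hs : MeasurableSet s)
    (hh : LocallyIntegrable h μ) :
    Tendsto (fun k => ∫ x, h x * ψ k x ∂μ) atTop (𝓝 (∫ x in s, h x ∂μ)) := by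
  obtain ⟨φ, hφ_cont, hφ_supp, hφ⟩ := hψ.exists_dominating
  rw [setIntegral_eq_integral_mul_indicator_one hs]
  refine tendsto_integral_of_dominated_convergence (fun x => ‖h x * φ x‖)
    (fun k => (hψ.integrable_mul hh k).aestronglyMeasurable)
    (hh.integrable_smul_right_of_hasCompactSupport hφ_cont hφ_supp).norm
    (fun k => .of_forall fun x => ?_) (.of_forall fun x => (hψ.tendsto x).const_mul (h x))
  simp only [norm_mul]
  exact mul_le_mul_of_nonneg_left ((hφ k x).trans (le_abs_self _)) (norm_nonneg _)

end IsIndicatorApprox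

section Portmanteau

variable {X ι : Type*} [TopologicalSpace X] [T2Space X] [LocallyCompactSpace X]
  [HasOuterApproxClosed X] [MeasurableSpace X] [OpensMeasurableSpace X] {μ : Measure X}
  {l : Filter ι} {f : ι → X → ℝ} {g : X → ℝ} {s : Set X} {a : ℝ}

lemma eventually_lt_setIntegral_of_isOpen (hf : ∀ i, LocallyIntegrable (f i) μ)
    (hg : LocallyIntegrable g μ) (hf_nonneg : ∀ i, 0 ≤ᵐ[μ] f i)
    (hconv : ∀ φ : X → ℝ, Continuous φ → HasCompactSupport φ →
      Tendsto (fun i => ∫ x, f i x * φ x ∂μ) l (𝓝 (∫ x, g x * φ x ∂μ)))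
    (hs_open : IsOpen s) (hs_compact : IsCompact (closure s)) (ha : a < ∫ x in s, g x ∂μ) :
    ∀ᶠ i in l, a < ∫ x in s, f i x ∂μ := by
  obtain ⟨ψ, hψ, hψ_le⟩ := exists_isIndicatorApprox_le hs_open hs_compact
  obtain ⟨k, hk⟩ :=
    ((hψ.tendsto_integral_mul hs_open.measurableSet hg).eventually_const_lt ha).exists
  filter_upwards [(hconv (ψ k) (hψ.continuous k)
    (hψ.hasCompactSupport k)).eventually_const_lt hk] with i hi
  exact hi.trans_le (integral_mul_le_setIntegral_of_le_indicator hs_open.measurableSet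
    (hf_nonneg i) (((hf i).integrableOn_isCompact hs_compact).mono_set subset_closure)
    (hψ.integrable_mul (hf i) k) (hψ_le k))

lemma eventually_setIntegral_lt_of_isCompact (hf : ∀ i, LocallyIntegrable (f i) μ)
    (hg : LocallyIntegrable g μ) (hf_nonneg : ∀ i, 0 ≤ᵐ[μ] f i)
    (hconv : ∀ φ : X → ℝ, Continuous φ → HasCompactSupport φ →
      Tendsto (fun i => ∫ x, f i x * φ x ∂μ) l (𝓝 (∫ x, g x * φ x ∂μ)))
    (hs : IsCompact s) (ha : ∫ x in s, g x ∂μ < a) :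
    ∀ᶠ i in l, ∫ x in s, f i x ∂μ < a := by
  obtain ⟨ψ, hψ, hψ_ge⟩ := exists_isIndicatorApprox_ge hs hs.isClosed
  obtain ⟨k, hk⟩ := ((hψ.tendsto_integral_mul hs.measurableSet hg).eventually_lt_const ha).exists
  filter_upwards [(hconv (ψ k) (hψ.continuous k)
    (hψ.hasCompactSupport k)).eventually_lt_const hk] with i hi
  exact (setIntegral_le_integral_mul_of_indicator_le hs.measurableSet (hf_nonneg i)
    ((hf i).integrableOn_isCompact hs) (hψ.integrable_mul (hf i) k) (hψ_ge k)).trans_lt hi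

theorem weak_convergence_on_balls_general (hf : ∀ i, LocallyIntegrable (f i) μ)
    (hg : LocallyIntegrable g μ) (hf_nonneg : ∀ i, 0 ≤ᵐ[μ] f i)
    (hconv : ∀ φ : X → ℝ, Continuous φ → HasCompactSupport φ →
      Tendsto (fun i => ∫ x, f i x * φ x ∂μ) l (𝓝 (∫ x, g x * φ x ∂μ)))
    (hs : IsCompact (closure s)) (hs_null : μ (frontier s) = 0) :
    Tendsto (fun i => ∫ x in s, f i x ∂μ) l (𝓝 (∫ x in s, g x ∂μ)) := by
  refine tendsto_order.2 ⟨fun a ha => ?_, fun a ha => ?_⟩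
  · simp only [← setIntegral_congr_set (interior_ae_eq_of_null_frontier hs_null)] at ha ⊢
    exact eventually_lt_setIntegral_of_isOpen hf hg hf_nonneg hconv isOpen_interior
      (hs.of_isClosed_subset isClosed_closure (closure_mono interior_subset)) ha
  · simp only [← setIntegral_congr_set (closure_ae_eq_of_null_frontier hs_null)] at ha ⊢
    exact eventually_setIntegral_lt_of_isCompact hf hg hf_nonneg hconv hs ha

end Portmanteau

/-- If `(f_n)` and `f` are nonnegative locally integrable functions on `ℝ³` such that
`∫ f_n φ → ∫ f φ` for every continuous compactly supported `φ`, then for every `R > 0`,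
`∫_{B_R} f_n → ∫_{B_R} f`. -/
theorem weak_convergence_on_balls
    (f : ℕ → EuclideanSpace ℝ (Fin 3) → ℝ) (g : EuclideanSpace ℝ (Fin 3) → ℝ)
    (hf : ∀ n, LocallyIntegrable (f n) volume) (hg : LocallyIntegrable g volume)
    (hfpos : ∀ n x, 0 ≤ f n x) (hgpos : ∀ x, 0 ≤ g x)
    (hconv : ∀ φ : EuclideanSpace ℝ (Fin 3) → ℝ, Continuous φ → HasCompactSupport φ →
      Tendsto (fun n => ∫ x, f n x * φ x) atTop (𝓝 (∫ x, g x * φ x))) :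
    ∀ R : ℝ, 0 < R →
      Tendsto (fun n => ∫ x in Metric.ball (0 : EuclideanSpace ℝ (Fin 3)) R, f n x) atTop
        (𝓝 (∫ x in Metric.ball (0 : EuclideanSpace ℝ (Fin 3)) R, g x)) := by
  intro R _
  exact weak_convergence_on_balls_general hf hg (fun n => .of_forall (hfpos n)) hconv
    Metric.isBounded_ball.isCompact_closure ((convex_ball 0 R).addHaar_frontier volume)
end
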